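/- Let C be a binary completely regular code of length 15 with minimum distance 5. Then the number of ordered pairs (α,β) ∈ C × C with d(α,β) = i equals 256 for i = 0, 42·256 for i = 5, 70·256 for i = 6, 15·256 for i = 7, 15·256 for i = 8, 70·256 for i = 9, 42·256 for i = 10, 256 for i = 15, and is 0 for all other values of i; that is, C has distance distribution a(C) = (1,0,0,0,0,42,70,15,15,70,42,0,0,0,0,1). In particular the Hamming distance between any two codewords of C lies in {0, 5, 6, 7, 8, 9, 10, 15}. -/

import Mathlib

open Set

/-- Distance from a vertex to a code in the binary Hamming space. -/
noncomputable def distToCode {m : ℕ} (C : Set (Fin m → ZMod 2)) (x : Fin m → ZMod 2) : ℕ :=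
  sInf {d | ∃ c ∈ C, hammingDist x c = d}

/-- `C` has minimum distance `δ`. -/
def IsMinDist {m : ℕ} (C : Set (Fin m → ZMod 2)) (δ : ℕ) : Prop :=
  (∀ x ∈ C, ∀ y ∈ C, x ≠ y → δ ≤ hammingDist x y) ∧
  ∃ x ∈ C, ∃ y ∈ C, x ≠ y ∧ hammingDist x y = δ

/-- `C` is completely regular: the number of codewords at distance `k` from `γ`
depends only on `distToCode C γ` and `k`. -/
def IsCompletelyRegular {m : ℕ} (C : Set (Fin m → ZMod 2)) : Prop :=
  ∀ γ γ' : Fin m → ZMod 2, distToCode C γ = distToCode C γ' →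
    ∀ k : ℕ, {c ∈ C | hammingDist γ c = k}.ncard = {c ∈ C | hammingDist γ' c = k}.ncard


/-- Flip coordinate `i`. -/
def flipAt (x : Fin 15 → ZMod 2) (i : Fin 15) : Fin 15 → ZMod 2 :=
  Function.update x i (x i + 1)

open Classical in
/-- Number of codewords at distance `k` from `x`. -/
noncomputable def cnt (C : Set (Fin 15 → ZMod 2)) (x : Fin 15 → ZMod 2) (k : ℕ) : ℕ :=
  (Finset.univ.filter (fun c => c ∈ C ∧ hammingDist x c = k)).card

lemma cnt_eq_ncard (C : Set (Fin 15 → ZMod 2)) (x : Fin 15 → ZMod 2) (k : ℕ) :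
    {c ∈ C | hammingDist x c = k}.ncard = cnt C x k := by
  classical
  unfold cnt
  rw [← Set.ncard_coe_finset]
  congr 1
  ext c
  simp

lemma zmod2_aux : ∀ a b : ZMod 2, a ≠ b → a + 1 = b := by decide
lemma zmod2_aux2 : ∀ a : ZMod 2, a + 1 ≠ a := by decide

lemma dist_flip_ne (x c : Fin 15 → ZMod 2) (i : Fin 15) (h : x i ≠ c i) :
    hammingDist (flipAt x i) c + 1 = hammingDist x c := by
  classical
  unfold hammingDist flipAt
  have : (Finset.univ.filter (fun j => x j ≠ c j)) =
      insert i (Finset.univ.filter (fun j => Function.update x i (x i + 1) j ≠ c j)) := by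
    ext j
    by_cases hj : j = i
    · subst hj; simp [h]
    · simp [hj]
  rw [this, Finset.card_insert_of_notMem]
  simp [zmod2_aux _ _ h]

lemma dist_flip_eq (x c : Fin 15 → ZMod 2) (i : Fin 15) (h : x i = c i) :
    hammingDist (flipAt x i) c = hammingDist x c + 1 := by
  classical
  unfold hammingDist flipAt
  have : (Finset.univ.filter (fun j => Function.update x i (x i + 1) j ≠ c j)) =
      insert i (Finset.univ.filter (fun j => x j ≠ c j)) := by
    ext j
    by_cases hj : j = i
    · subst hj; simp [← h]
    · simp [hj]
  rw [this, Finset.card_insert_of_notMem]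
  simp [h]

lemma card_ne (x c : Fin 15 → ZMod 2) :
    (Finset.univ.filter (fun i => x i ≠ c i)).card = hammingDist x c := rfl

lemma card_eq (x c : Fin 15 → ZMod 2) :
    (Finset.univ.filter (fun i => x i = c i)).card = 15 - hammingDist x c := by
  have h := Finset.card_filter_add_card_filter_not (s := (Finset.univ : Finset (Fin 15)))
    (fun i => x i = c i)
  have h2 := card_ne x c
  simp only [Finset.card_univ, Fintype.card_fin] at h
  simp only [ne_eq] at h2
  omega

lemma flip_count_zero (x c : Fin 15 → ZMod 2) :
    (∑ i, if hammingDist (flipAt x i) c = 0 then 1 else 0) =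
      if hammingDist x c = 1 then 1 else 0 := by
  rw [← Finset.card_filter]
  have key : (Finset.univ.filter (fun i => hammingDist (flipAt x i) c = 0)) =
      if hammingDist x c = 1 then Finset.univ.filter (fun i => x i ≠ c i) else ∅ := by
    ext i
    by_cases h : x i = c i
    · have := dist_flip_eq x c i h
      split_ifs <;> simp [h] <;> (try simp only [← hammingDist_eq_zero]) <;> omega
    · have := dist_flip_ne x c i h
      split_ifs <;> simp [h] <;> (try simp only [← hammingDist_eq_zero]) <;> omega
  rw [key]
  split_ifs with h
  · rw [card_ne, h]
  · rfl

lemma flip_count_succ (x c : Fin 15 → ZMod 2) (k : ℕ) :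
    (∑ i, if hammingDist (flipAt x i) c = k + 1 then 1 else 0) =
      (k + 2) * (if hammingDist x c = k + 2 then 1 else 0)
        + (15 - k) * (if hammingDist x c = k then 1 else 0) := by
  rw [← Finset.card_filter]
  have key : (Finset.univ.filter (fun i => hammingDist (flipAt x i) c = k + 1)) =
      if hammingDist x c = k + 2 then Finset.univ.filter (fun i => x i ≠ c i) else
      if hammingDist x c = k then Finset.univ.filter (fun i => x i = c i) else ∅ := by
    ext i
    by_cases h : x i = c i
    · have := dist_flip_eq x c i h
      split_ifs <;> simp [h] <;> omega
    · have := dist_flip_ne x c i h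
      split_ifs <;> simp [h] <;> omega
  rw [key]
  by_cases h1 : hammingDist x c = k + 2
  · rw [if_pos h1, card_ne, h1]; simp
  · by_cases h2 : hammingDist x c = k
    · rw [if_neg h1, if_pos h2, card_eq, h2]; simp
    · simp [h1, h2]

open Classical in
lemma cnt_sum (C : Set (Fin 15 → ZMod 2)) (x : Fin 15 → ZMod 2) (k : ℕ) :
    cnt C x k = ∑ c, (if c ∈ C then 1 else 0) * (if hammingDist x c = k then 1 else 0) := by
  unfold cnt
  rw [Finset.card_filter]
  refine Finset.sum_congr rfl fun c _ => ?_
  by_cases h1 : c ∈ C <;> by_cases h2 : hammingDist x c = k <;> simp [h1, h2]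

lemma kraw_zero (C : Set (Fin 15 → ZMod 2)) (x : Fin 15 → ZMod 2) :
    ∑ i, cnt C (flipAt x i) 0 = cnt C x 1 := by
  classical
  simp only [cnt_sum]
  rw [Finset.sum_comm]
  refine Finset.sum_congr rfl fun c _ => ?_
  rw [← Finset.mul_sum, flip_count_zero]

lemma kraw_succ (C : Set (Fin 15 → ZMod 2)) (x : Fin 15 → ZMod 2) (k : ℕ) :
    ∑ i, cnt C (flipAt x i) (k + 1) = (k + 2) * cnt C x (k + 2) + (15 - k) * cnt C x k := by
  classical
  simp only [cnt_sum]
  rw [Finset.sum_comm, Finset.mul_sum, Finset.mul_sum, ← Finset.sum_add_distrib]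
  refine Finset.sum_congr rfl fun c _ => ?_
  rw [← Finset.mul_sum, flip_count_succ]
  ring

lemma cnt_pos_iff (C : Set (Fin 15 → ZMod 2)) (x : Fin 15 → ZMod 2) (k : ℕ) :
    0 < cnt C x k ↔ ∃ c ∈ C, hammingDist x c = k := by
  classical
  unfold cnt
  rw [Finset.card_pos]
  constructor
  · rintro ⟨c, hc⟩
    simp at hc
    exact ⟨c, hc⟩
  · rintro ⟨c, hc⟩
    exact ⟨c, by simpa using hc⟩

lemma dist_le (C : Set (Fin 15 → ZMod 2)) (x c : Fin 15 → ZMod 2) (hc : c ∈ C) :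
    distToCode C x ≤ hammingDist x c := Nat.sInf_le ⟨c, hc, rfl⟩

lemma dist_mem (C : Set (Fin 15 → ZMod 2)) (hC : C.Nonempty) (x : Fin 15 → ZMod 2) :
    ∃ c ∈ C, hammingDist x c = distToCode C x := by
  obtain ⟨c, hc⟩ := hC
  exact Nat.sInf_mem (s := {d | ∃ c ∈ C, hammingDist x c = d}) ⟨_, c, hc, rfl⟩

lemma dist_flip_bounds (C : Set (Fin 15 → ZMod 2)) (hC : C.Nonempty) (x : Fin 15 → ZMod 2)
    (i : Fin 15) : distToCode C (flipAt x i) ≤ distToCode C x + 1 ∧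
      distToCode C x ≤ distToCode C (flipAt x i) + 1 := by
  have key : ∀ c, hammingDist (flipAt x i) c ≤ hammingDist x c + 1 ∧
      hammingDist x c ≤ hammingDist (flipAt x i) c + 1 := by
    intro c
    by_cases h : x i = c i
    · have := dist_flip_eq x c i h; omega
    · have := dist_flip_ne x c i h; omega
  obtain ⟨c, hc, h1⟩ := dist_mem C hC x
  obtain ⟨c', hc', h2⟩ := dist_mem C hC (flipAt x i)
  have := dist_le C (flipAt x i) c hc
  have := dist_le C x c' hc'
  have := key c
  have := key c'
  omega

open Classical in
/-- Entry of the outer distribution matrix: number of codewords at distance `k`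
from a vertex at distance `j` from the code. -/
noncomputable def B (C : Set (Fin 15 → ZMod 2)) (j k : ℕ) : ℕ :=
  if h : ∃ x, distToCode C x = j then cnt C h.choose k else 0

lemma cnt_eq_B (C : Set (Fin 15 → ZMod 2)) (hreg : IsCompletelyRegular C)
    (x : Fin 15 → ZMod 2) (j : ℕ) (hx : distToCode C x = j) (k : ℕ) : cnt C x k = B C j k := by
  have h : ∃ x, distToCode C x = j := ⟨x, hx⟩
  unfold B
  rw [dif_pos h]
  have := hreg x h.choose (hx.trans h.choose_spec.symm) k
  rwa [cnt_eq_ncard, cnt_eq_ncard] at this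

lemma B_lt (C : Set (Fin 15 → ZMod 2)) (j k : ℕ) (hk : k < j) : B C j k = 0 := by
  unfold B
  split_ifs with h
  · by_contra h0
    obtain ⟨c, hc, hck⟩ := (cnt_pos_iff C h.choose k).1 (Nat.pos_of_ne_zero h0)
    have := dist_le C h.choose c hc
    have := h.choose_spec
    omega
  · rfl

lemma B_diag (C : Set (Fin 15 → ZMod 2)) (hC : C.Nonempty) (hreg : IsCompletelyRegular C)
    (x : Fin 15 → ZMod 2) (j : ℕ) (hx : distToCode C x = j) : 1 ≤ B C j j := by
  rw [← cnt_eq_B C hreg x j hx]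
  apply (cnt_pos_iff C x j).2
  rw [← hx]
  exact dist_mem C hC x

lemma level_sum (C : Set (Fin 15 → ZMod 2)) (hC : C.Nonempty) (hreg : IsCompletelyRegular C)
    (x : Fin 15 → ZMod 2) (j : ℕ) (hx : distToCode C x = j) :
    ∃ p q r : ℕ, p + q + r = 15 ∧ (j = 0 → p = 0) ∧
      (0 < r → ∃ y, distToCode C y = j + 1) ∧
      (p * B C (j - 1) 0 + q * B C j 0 + r * B C (j + 1) 0 = B C j 1) ∧
      ∀ k, p * B C (j - 1) (k + 1) + q * B C j (k + 1) + r * B C (j + 1) (k + 1) =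
        (k + 2) * B C j (k + 2) + (15 - k) * B C j k := by
  classical
  have main : ∀ f : ℕ → ℕ, ∑ i, f (distToCode C (flipAt x i)) =
      (∑ i, if distToCode C (flipAt x i) + 1 = j then 1 else 0) * f (j - 1) +
      (∑ i, if distToCode C (flipAt x i) = j then 1 else 0) * f j +
      (∑ i, if distToCode C (flipAt x i) = j + 1 then 1 else 0) * f (j + 1) := by
    intro f
    rw [Finset.sum_mul, Finset.sum_mul, Finset.sum_mul, ← Finset.sum_add_distrib,
      ← Finset.sum_add_distrib]
    refine Finset.sum_congr rfl fun i _ => ?_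
    have hb := dist_flip_bounds C hC x i
    rw [hx] at hb
    generalize distToCode C (flipAt x i) = d at *
    have : d + 1 = j ∨ d = j ∨ d = j + 1 := by omega
    rcases this with h | h | h
    · subst h; simp [show ¬ (d = d + 1 + 1) by omega]
    · subst h; simp
    · subst h; simp [show ¬ (j + 1 + 1 = j) by omega]
  refine ⟨∑ i, if distToCode C (flipAt x i) + 1 = j then 1 else 0,
    ∑ i, if distToCode C (flipAt x i) = j then 1 else 0,
    ∑ i, if distToCode C (flipAt x i) = j + 1 then 1 else 0, ?_, ?_, ?_, ?_, ?_⟩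
  rotate_left 3
  · have := main (fun d => B C d 0)
    rw [← this, ← cnt_eq_B C hreg x j hx, ← kraw_zero]
    exact Finset.sum_congr rfl fun i _ => (cnt_eq_B C hreg _ _ rfl _).symm
  · intro k
    have := main (fun d => B C d (k + 1))
    rw [← this, ← cnt_eq_B C hreg x j hx, ← cnt_eq_B C hreg x j hx, ← kraw_succ]
    exact Finset.sum_congr rfl fun i _ => (cnt_eq_B C hreg _ _ rfl _).symm
  · have := main (fun _ => 1)
    simpa using this.symm
  · intro hj
    subst hj
    simp
  · intro h
    by_contra hne
    push Not at hne
    simp [hne] at h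

set_option maxHeartbeats 2000000 in
lemma outer (C : Set (Fin 15 → ZMod 2)) (hC : C.Nonempty)
    (hreg : IsCompletelyRegular C) (hd : IsMinDist C 5) :
    (∀ k, 15 * B C 1 (k + 1) = (k + 2) * B C 0 (k + 2) + (15 - k) * B C 0 k) ∧
    (∀ k, B C 0 (k + 1) + 14 * B C 2 (k + 1) = (k + 2) * B C 1 (k + 2) + (15 - k) * B C 1 k) ∧
    (∀ k, 2 * B C 1 (k + 1) + 12 * B C 2 (k + 1) + B C 3 (k + 1) =
      (k + 2) * B C 2 (k + 2) + (15 - k) * B C 2 k) ∧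
    (∀ k, 15 * B C 2 (k + 1) = (k + 2) * B C 3 (k + 2) + (15 - k) * B C 3 k) ∧
    B C 0 0 = 1 ∧ B C 0 1 = 0 ∧ B C 1 1 = 1 := by
  obtain ⟨hmin, α, hα, β, hβ, hαβ, h5⟩ := hd
  have hα0 : distToCode C α = 0 := by
    have := dist_le C α α hα
    simpa using this
  have c0 := cnt_eq_B C hreg α 0 hα0
  have z : ∀ k, 0 < k → k < 5 → B C 0 k = 0 := by
    intro k hk hk5
    rw [← c0]
    by_contra h0
    obtain ⟨c, hc, hck⟩ := (cnt_pos_iff C α k).1 (Nat.pos_of_ne_zero h0)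
    have hne : α ≠ c := by
      rintro rfl
      simp at hck
      omega
    have := hmin α hα c hc hne
    omega
  have z1 := z 1 (by norm_num) (by norm_num)
  have z2 := z 2 (by norm_num) (by norm_num)
  have z3 := z 3 (by norm_num) (by norm_num)
  have z4 := z 4 (by norm_num) (by norm_num)
  have z5 : 1 ≤ B C 0 5 := by
    rw [← c0]
    exact (cnt_pos_iff C α 5).2 ⟨β, hβ, h5⟩
  have z0 : B C 0 0 = 1 := by
    rw [← c0]
    unfold cnt
    rw [Finset.card_eq_one]
    refine ⟨α, ?_⟩
    ext c
    simp only [Finset.mem_filter, Finset.mem_univ, true_and, Finset.mem_singleton,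
      hammingDist_eq_zero]
    constructor
    · exact fun h => h.2.symm
    · rintro rfl
      exact ⟨hα, rfl⟩
  have l10 := B_lt C 1 0 (by norm_num)
  have l20 := B_lt C 2 0 (by norm_num)
  have l21 := B_lt C 2 1 (by norm_num)
  have l30 := B_lt C 3 0 (by norm_num)
  have l31 := B_lt C 3 1 (by norm_num)
  have l32 := B_lt C 3 2 (by norm_num)
  have l40 := B_lt C 4 0 (by norm_num)
  have l41 := B_lt C 4 1 (by norm_num)
  have l42 := B_lt C 4 2 (by norm_num)
  have l43 := B_lt C 4 3 (by norm_num)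
  -- level 0
  obtain ⟨p, q, r, hs, hp, hr, e0, e⟩ := level_sum C hC hreg α 0 hα0
  have hp := hp rfl
  have hq : q = 0 := by
    subst hp
    simp only [Nat.zero_sub, Nat.zero_add, z0, z1, l10] at e0
    omega
  have hr15 : r = 15 := by omega
  subst hp hq hr15
  have R0 : ∀ k, 15 * B C 1 (k + 1) = (k + 2) * B C 0 (k + 2) + (15 - k) * B C 0 k := by
    intro k
    simpa using e k
  clear e e0
  have b11 : B C 1 1 = 1 := by have h := R0 0; norm_num at h; omega
  have b12 : B C 1 2 = 0 := by have h := R0 1; norm_num at h; omega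
  have b13 : B C 1 3 = 0 := by have h := R0 2; norm_num at h; omega
  have b14 : 15 * B C 1 4 = 5 * B C 0 5 := by have h := R0 3; norm_num at h; omega
  -- level 1
  obtain ⟨x1, hx1⟩ := hr (by norm_num)
  clear hr hs
  obtain ⟨p, q, r, hs, -, hr, e0, e⟩ := level_sum C hC hreg x1 1 hx1
  have hp : p = 1 := by
    norm_num [z0, l10, l20, b11] at e0
    omega
  have hq : q = 0 := by
    have h := e 0
    norm_num [z0, z1, l10, l20, l21, b11, b12] at h
    omega
  have hr14 : r = 14 := by omega
  subst hp hq hr14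
  have R1 : ∀ k, B C 0 (k + 1) + 14 * B C 2 (k + 1) =
      (k + 2) * B C 1 (k + 2) + (15 - k) * B C 1 k := by
    intro k
    simpa using e k
  clear e e0
  have b22 : B C 2 2 = 1 := by have h := R1 1; norm_num at h; omega
  have b23 : 14 * B C 2 3 = 4 * B C 1 4 := by have h := R1 2; norm_num at h; omega
  have b24 : 14 * B C 2 4 = 5 * B C 1 5 := by have h := R1 3; norm_num at h; omega
  -- level 2
  obtain ⟨x2, hx2⟩ := hr (by norm_num)
  clear hr hs
  obtain ⟨p, q, r, hs, -, hr, e0, e⟩ := level_sum C hC hreg x2 2 hx2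
  have hp : p = 2 := by
    have h := e 0
    norm_num [l20, l21, l31, b11, b22] at h
    omega
  have hq : q = 3 * B C 2 3 := by
    have h := e 1
    norm_num [b12, b22, l32, l21] at h
    omega
  have hlam : B C 2 3 = 2 ∨ B C 2 3 = 4 := by omega
  obtain ⟨x3, hx3⟩ := hr (by omega)
  clear hr
  have b33 := B_diag C hC hreg x3 3 hx3
  obtain ⟨p', q', r', hs', -, -, e0', e'⟩ := level_sum C hC hreg x3 3 hx3
  have hp' : p' = 3 * B C 3 3 := by
    have h := e' 1
    norm_num [b22, l32, l42, l31] at h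
    omega
  have hq' : p' * B C 2 3 + q' * B C 3 3 = 4 * B C 3 4 := by
    have h := e' 2
    norm_num [l43, l32] at h
    omega
  have f3 := e 2
  have f4 := e 3
  rcases hlam with hl | hl
  · exfalso
    have hq6 : q = 6 := by omega
    have hr7 : r = 7 := by omega
    subst hp hq6 hr7
    norm_num [hl, b13, b22] at f3 f4
    have h33 : B C 3 3 = 3 := by omega
    have hp9 : p' = 9 := by omega
    rw [h33, hp9, hl] at hq'
    omega
  · have hq12 : q = 12 := by omega
    have hr1 : r = 1 := by omega
    subst hp hq12 hr1
    norm_num [hl, b13, b22] at f3 f4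
    have h33 : B C 3 3 = 5 := by omega
    have hp15 : p' = 15 := by omega
    have hq0 : q' = 0 := by omega
    have hr0 : r' = 0 := by omega
    subst hp15 hq0 hr0
    refine ⟨R0, R1, ?_, ?_, z0, z1, b11⟩
    · intro k
      simpa using e k
    · intro k
      simpa using e' k

set_option maxHeartbeats 2000000 in
lemma outer_vals (C : Set (Fin 15 → ZMod 2)) (hC : C.Nonempty)
    (hreg : IsCompletelyRegular C) (hd : IsMinDist C 5) :
    ∀ i, i ≤ 15 → B C 0 i = if i = 0 then 1 else if i = 5 then 42 else if i = 6 then 70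
          else if i = 7 then 15 else if i = 8 then 15
          else if i = 9 then 70 else if i = 10 then 42
          else if i = 15 then 1 else 0 := by
  obtain ⟨R0, R1, R2, R3, b0_0, b0_1, b1_1⟩ := outer C hC hreg hd
  have b1_0 := B_lt C 1 0 (by norm_num)
  have b2_0 := B_lt C 2 0 (by norm_num)
  have b2_1 := B_lt C 2 1 (by norm_num)
  have b3_0 := B_lt C 3 0 (by norm_num)
  have b3_1 := B_lt C 3 1 (by norm_num)
  have b0_2 : B C 0 2 = 0 := by have h := R0 0; norm_num at h; omega
  have b1_2 : B C 1 2 = 0 := by have h := R1 0; norm_num at h; omega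
  have b2_2 : B C 2 2 = 1 := by have h := R2 0; norm_num at h; omega
  have b3_2 : B C 3 2 = 0 := by have h := R3 0; norm_num at h; omega
  have b0_3 : B C 0 3 = 0 := by have h := R0 1; norm_num at h; omega
  have b1_3 : B C 1 3 = 0 := by have h := R1 1; norm_num at h; omega
  have b2_3 : B C 2 3 = 4 := by have h := R2 1; norm_num at h; omega
  have b3_3 : B C 3 3 = 5 := by have h := R3 1; norm_num at h; omega
  have b0_4 : B C 0 4 = 0 := by have h := R0 2; norm_num at h; omega
  have b1_4 : B C 1 4 = 14 := by have h := R1 2; norm_num at h; omega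
  have b2_4 : B C 2 4 = 10 := by have h := R2 2; norm_num at h; omega
  have b3_4 : B C 3 4 = 15 := by have h := R3 2; norm_num at h; omega
  have b0_5 : B C 0 5 = 42 := by have h := R0 3; norm_num at h; omega
  have b1_5 : B C 1 5 = 28 := by have h := R1 3; norm_num at h; omega
  have b2_5 : B C 2 5 = 23 := by have h := R2 3; norm_num at h; omega
  have b3_5 : B C 3 5 = 18 := by have h := R3 3; norm_num at h; omega
  have b0_6 : B C 0 6 = 70 := by have h := R0 4; norm_num at h; omega
  have b1_6 : B C 1 6 = 35 := by have h := R1 4; norm_num at h; omega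
  have b2_6 : B C 2 6 = 40 := by have h := R2 4; norm_num at h; omega
  have b3_6 : B C 3 6 = 30 := by have h := R3 4; norm_num at h; omega
  have b0_7 : B C 0 7 = 15 := by have h := R0 5; norm_num at h; omega
  have b1_7 : B C 1 7 = 50 := by have h := R1 5; norm_num at h; omega
  have b2_7 : B C 2 7 = 50 := by have h := R2 5; norm_num at h; omega
  have b3_7 : B C 3 7 = 60 := by have h := R3 5; norm_num at h; omega
  have b0_8 : B C 0 8 = 15 := by have h := R0 6; norm_num at h; omega
  have b1_8 : B C 1 8 = 50 := by have h := R1 6; norm_num at h; omega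
  have b2_8 : B C 2 8 = 50 := by have h := R2 6; norm_num at h; omega
  have b3_8 : B C 3 8 = 60 := by have h := R3 6; norm_num at h; omega
  have b0_9 : B C 0 9 = 70 := by have h := R0 7; norm_num at h; omega
  have b1_9 : B C 1 9 = 35 := by have h := R1 7; norm_num at h; omega
  have b2_9 : B C 2 9 = 40 := by have h := R2 7; norm_num at h; omega
  have b3_9 : B C 3 9 = 30 := by have h := R3 7; norm_num at h; omega
  have b0_10 : B C 0 10 = 42 := by have h := R0 8; norm_num at h; omega
  have b1_10 : B C 1 10 = 28 := by have h := R1 8; norm_num at h; omega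
  have b2_10 : B C 2 10 = 23 := by have h := R2 8; norm_num at h; omega
  have b3_10 : B C 3 10 = 18 := by have h := R3 8; norm_num at h; omega
  have b0_11 : B C 0 11 = 0 := by have h := R0 9; norm_num at h; omega
  have b1_11 : B C 1 11 = 14 := by have h := R1 9; norm_num at h; omega
  have b2_11 : B C 2 11 = 10 := by have h := R2 9; norm_num at h; omega
  have b3_11 : B C 3 11 = 15 := by have h := R3 9; norm_num at h; omega
  have b0_12 : B C 0 12 = 0 := by have h := R0 10; norm_num at h; omega
  have b1_12 : B C 1 12 = 0 := by have h := R1 10; norm_num at h; omega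
  have b2_12 : B C 2 12 = 4 := by have h := R2 10; norm_num at h; omega
  have b3_12 : B C 3 12 = 5 := by have h := R3 10; norm_num at h; omega
  have b0_13 : B C 0 13 = 0 := by have h := R0 11; norm_num at h; omega
  have b1_13 : B C 1 13 = 0 := by have h := R1 11; norm_num at h; omega
  have b2_13 : B C 2 13 = 1 := by have h := R2 11; norm_num at h; omega
  have b3_13 : B C 3 13 = 0 := by have h := R3 11; norm_num at h; omega
  have b0_14 : B C 0 14 = 0 := by have h := R0 12; norm_num at h; omega
  have b1_14 : B C 1 14 = 1 := by have h := R1 12; norm_num at h; omega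
  have b2_14 : B C 2 14 = 0 := by have h := R2 12; norm_num at h; omega
  have b3_14 : B C 3 14 = 0 := by have h := R3 12; norm_num at h; omega
  have b0_15 : B C 0 15 = 1 := by have h := R0 13; norm_num at h; omega
  have b1_15 : B C 1 15 = 0 := by have h := R1 13; norm_num at h; omega
  have b2_15 : B C 2 15 = 0 := by have h := R2 13; norm_num at h; omega
  have b3_15 : B C 3 15 = 0 := by have h := R3 13; norm_num at h; omega
  intro i hi
  interval_cases i <;> simp [*]

lemma dist_le15 (x c : Fin 15 → ZMod 2) : hammingDist x c ≤ 15 := by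
  simpa using hammingDist_le_card_fintype (x := x) (y := c)

lemma cnt_big (C : Set (Fin 15 → ZMod 2)) (x : Fin 15 → ZMod 2) (k : ℕ) (hk : 15 < k) :
    cnt C x k = 0 := by
  by_contra h0
  obtain ⟨c, -, h⟩ := (cnt_pos_iff C x k).1 (Nat.pos_of_ne_zero h0)
  have := dist_le15 x c
  omega

/-- A binary completely regular code of length 15 with minimum distance 5 has
distance distribution `(1,0,0,0,0,42,70,15,15,70,42,0,0,0,0,1)`; in particular all
distances between codewords lie in `{0, 5, 6, 7, 8, 9, 10, 15}`. -/
theorem stmt_18 (C : Set (Fin 15 → ZMod 2)) (hC : C.Nonempty)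
    (hreg : IsCompletelyRegular C) (hd : IsMinDist C 5) :
    (∀ i : ℕ,
      {p : (Fin 15 → ZMod 2) × (Fin 15 → ZMod 2) |
          p.1 ∈ C ∧ p.2 ∈ C ∧ hammingDist p.1 p.2 = i}.ncard =
        if i = 0 then 256 else if i = 5 then 42 * 256 else if i = 6 then 70 * 256
          else if i = 7 then 15 * 256 else if i = 8 then 15 * 256
          else if i = 9 then 70 * 256 else if i = 10 then 42 * 256
          else if i = 15 then 256 else 0) ∧
    ∀ α ∈ C, ∀ β ∈ C, hammingDist α β ∈ ({0, 5, 6, 7, 8, 9, 10, 15} : Set ℕ) := by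
  classical
  have zero : ∀ α ∈ C, distToCode C α = 0 := by
    intro α hα
    have := dist_le C α α hα
    simpa using this
  have vals : ∀ α ∈ C, ∀ i, cnt C α i =
      if i = 0 then 1 else if i = 5 then 42 else if i = 6 then 70
          else if i = 7 then 15 else if i = 8 then 15
          else if i = 9 then 70 else if i = 10 then 42
          else if i = 15 then 1 else 0 := by
    intro α hα i
    by_cases hi : i ≤ 15
    · rw [cnt_eq_B C hreg α 0 (zero α hα)]
      exact outer_vals C hC hreg hd i hi
    · rw [cnt_big C α i (by omega)]
      split_ifs <;> omega
  have hcard : (Finset.univ.filter (fun c => c ∈ C)).card = 256 := by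
    obtain ⟨α, hα⟩ := hC
    rw [Finset.card_eq_sum_card_fiberwise (f := fun c => hammingDist α c)
      (t := Finset.range 16)]
    · have : ∀ k ∈ Finset.range 16,
        ((Finset.univ.filter (fun c => c ∈ C)).filter (fun c => hammingDist α c = k)).card =
          cnt C α k := by
        intro k _
        rw [Finset.filter_filter]
        rfl
      rw [Finset.sum_congr rfl this]
      simp only [vals α hα]
      decide
    · intro c _
      have := dist_le15 α c
      simp
      omega
  constructor
  · intro i
    have h1 : {p : (Fin 15 → ZMod 2) × (Fin 15 → ZMod 2) |
          p.1 ∈ C ∧ p.2 ∈ C ∧ hammingDist p.1 p.2 = i} =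
        (((Finset.univ.filter (fun c => c ∈ C)).sigma
          (fun α => Finset.univ.filter (fun c => c ∈ C ∧ hammingDist α c = i))).map
          (Equiv.sigmaEquivProd _ _).toEmbedding : Set _) := by
      ext ⟨a, b⟩
      simp
    rw [h1, Set.ncard_coe_finset, Finset.card_map, Finset.card_sigma]
    have h2 : ∀ α ∈ Finset.univ.filter (fun c => c ∈ C),
        (Finset.univ.filter (fun c => c ∈ C ∧ hammingDist α c = i)).card =
        if i = 0 then 1 else if i = 5 then 42 else if i = 6 then 70
          else if i = 7 then 15 else if i = 8 then 15
          else if i = 9 then 70 else if i = 10 then 42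
          else if i = 15 then 1 else 0 := by
      intro α hα
      exact vals α (by simpa using hα) i
    rw [Finset.sum_congr rfl h2, Finset.sum_const, hcard]
    split_ifs <;> rfl
  · intro α hα β hβ
    have hpos := (cnt_pos_iff C α (hammingDist α β)).2 ⟨β, hβ, rfl⟩
    rw [vals α hα] at hpos
    simp only [Set.mem_insert_iff, Set.mem_singleton_iff]
    split_ifs at hpos <;> omega
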